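/- Let 𝒳 be a finite-dimensional real inner product space, β ≥ 0, A, B : 𝒳 ⇉ 𝒳 maximal β-strongly monotone operators, γ > 0 and θ̃ > 0. Then: (a) for every z = (u,v,x) and z′ = (u′,v′,x′) in 𝒵 := 𝒳³, ⟨ℒ_{θ̃}(z − z′), z − z′⟩ = (1 − θ̃)‖(u−u′) − (v−v′)‖², and for every r ∈ (ℒ_{θ̃} + γC)(z) and r′ ∈ (ℒ_{θ̃} + γC)(z′), ⟨r − r′, z − z′⟩ ≥ (1 − θ̃)‖(u−u′) − (v−v′)‖² + γβ(‖u−u′‖² + ‖v−v′‖²); (b) ℒ_{θ̃} + γC is maximal monotone whenever θ̃ ∈ (0, θ₀], where θ₀ := 1 + γβ/2. -/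

import Mathlib

open RealInnerProductSpace Filter Pointwise

/-- The inner product on the triple product space `𝒵 = 𝒳 × 𝒳 × 𝒳`. -/
noncomputable def inner3 {X : Type*} [NormedAddCommGroup X] [InnerProductSpace ℝ X]
    (z z' : X × X × X) : ℝ :=
  ⟪z.1, z'.1⟫ + ⟪z.2.1, z'.2.1⟫ + ⟪z.2.2, z'.2.2⟫

/-- The linear map `ℒ_θ̃(u,v,x) := ((1−θ̃)u + θ̃v − x, (θ̃−2)u + (1−θ̃)v + x, u − v)`. -/
def Lmap {X : Type*} [NormedAddCommGroup X] [InnerProductSpace ℝ X]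
    (θ : ℝ) (z : X × X × X) : X × X × X :=
  ((1 - θ) • z.1 + θ • z.2.1 - z.2.2,
    (θ - 2) • z.1 + (1 - θ) • z.2.1 + z.2.2,
    z.1 - z.2.1)

/-- The operator `(ℒ_θ̃ + γC)(u,v,x)` where `C(u,v,x) := A(u) × B(v) × {0}`. -/
def LC {X : Type*} [NormedAddCommGroup X] [InnerProductSpace ℝ X]
    (θ γ : ℝ) (A B : X → Set X) (z : X × X × X) : Set (X × X × X) :=
  {rr | ∃ a ∈ A z.1, ∃ b ∈ B z.2.1, rr = Lmap θ z + γ • ((a, b, (0 : X)) : X × X × X)}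

/-- `T : 𝒳 ⇉ 𝒳` is β-strongly monotone (β = 0 meaning just monotone). -/
def StrMono {X : Type*} [NormedAddCommGroup X] [InnerProductSpace ℝ X]
    (β : ℝ) (T : X → Set X) : Prop :=
  ∀ x x' w w' : X, w ∈ T x → w' ∈ T x' → β * ‖x - x'‖ ^ 2 ≤ ⟪w - w', x - x'⟫

/-- `T : 𝒳 ⇉ 𝒳` is maximal β-strongly monotone: it is β-strongly monotone and its graph
is not properly contained in the graph of another monotone operator. -/
def MaxStrMono {X : Type*} [NormedAddCommGroup X] [InnerProductSpace ℝ X]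
    (β : ℝ) (T : X → Set X) : Prop :=
  StrMono β T ∧ ∀ T' : X → Set X, StrMono 0 T' → (∀ x, T x ⊆ T' x) → T' = T

/-- Monotonicity of an operator on the triple product space `𝒵 = 𝒳³`. -/
def Mono3 {X : Type*} [NormedAddCommGroup X] [InnerProductSpace ℝ X]
    (T : (X × X × X) → Set (X × X × X)) : Prop :=
  ∀ z z' t t', t ∈ T z → t' ∈ T z' → 0 ≤ inner3 (z - z') (t - t')

/-- Maximal monotonicity of an operator on the triple product space `𝒵 = 𝒳³`. -/
def MaxMono3 {X : Type*} [NormedAddCommGroup X] [InnerProductSpace ℝ X]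
    (T : (X × X × X) → Set (X × X × X)) : Prop :=
  Mono3 T ∧ ∀ T', Mono3 T' → (∀ z, T z ⊆ T' z) → T' = T

/-- The ε-enlargement `T^[ε]` of an operator on `𝒳`. -/
def epsEnlX {X : Type*} [NormedAddCommGroup X] [InnerProductSpace ℝ X]
    (T : X → Set X) (ε : ℝ) (z : X) : Set X :=
  {t | ∀ z' t' : X, t' ∈ T z' → -ε ≤ ⟪t - t', z - z'⟫}

/-- The relaxed Peaceman–Rachford splitting method with relaxation parameter `θ` and
scaling `γ`: for `k ≥ 1`, `u_k = J_{γA}(x_{k−1})`, `v_k = J_{γB}(2u_k − x_{k−1})`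
(expressed through resolvent inclusions) and `x_k = x_{k−1} + θ(v_k − u_k)`. -/
structure RPR {X : Type*} [NormedAddCommGroup X] [InnerProductSpace ℝ X]
    (A B : X → Set X) (γ θ : ℝ) (x u v : ℕ → X) : Prop where
  resA : ∀ k, 1 ≤ k → x (k - 1) - u k ∈ γ • A (u k)
  resB : ∀ k, 1 ≤ k → (2 : ℝ) • u k - x (k - 1) - v k ∈ γ • B (v k)
  step : ∀ k, 1 ≤ k → x k = x (k - 1) + θ • (v k - u k)

/-!
Maximality is obtained by the converse half of Minty's theorem: a monotone operator `T` is maximal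
as soon as `M + T` is onto for some strictly monotone `M`. For `T = ℒ_θ + γC` the preconditioner
`M(u,v,x) = (u + c(u+v), v + c(u+v), (θ+c)⁻¹x)` makes the inclusion `y ∈ M z + T z` triangular:
once `x` is eliminated, `u` solves a resolvent inclusion for `A` and then `v` one for `B`. These
are solvable by the direct half of Minty's theorem. In terms of the points `k x - l w` and
`k x + l w`, with `w ∈ A x`, monotonicity says that one family is a nonexpansive image of the
other, so that half is the one-point extension property of nonexpansive maps (Kirszbraun). For
finitely many points this comes from maximizing a concave function on a simplex, and in general
from weak compactness of balls.
-/

section Kirszbraun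

variable {ι E F : Type*} [NormedAddCommGroup E] [InnerProductSpace ℝ E]
  [NormedAddCommGroup F] [InnerProductSpace ℝ F]

theorem sum_mul_norm_sub_sq_eq [Fintype ι] {w : ι → ℝ} (hw : ∑ i, w i = 1) (y : ι → F) (q : F) :
    ∑ i, w i * ‖q - y i‖ ^ 2
      = ∑ i, w i * ‖∑ j, w j • y j - y i‖ ^ 2 + ‖q - ∑ j, w j • y j‖ ^ 2 := by
  set m := ∑ j, w j • y j with hm
  have hcentred : ∑ i, w i • (m - y i) = 0 := by
    simp only [smul_sub, Finset.sum_sub_distrib, ← Finset.sum_smul, hw, one_smul, ← hm, sub_self]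
  have hcross : ∑ i, w i * ⟪q - m, m - y i⟫ = 0 := by
    simp only [← real_inner_smul_right, ← inner_sum, hcentred, inner_zero_right]
  have hexpand (i : ι) : w i * ‖q - y i‖ ^ 2
      = w i * ‖m - y i‖ ^ 2 + w i * ‖q - m‖ ^ 2 + 2 * (w i * ⟪q - m, m - y i⟫) := by
    rw [← sub_add_sub_cancel q m (y i), norm_add_sq_real]
    ring
  simp only [hexpand, Finset.sum_add_distrib, ← Finset.sum_mul, ← Finset.mul_sum, hw, hcross]
  ring

theorem sum_sum_mul_norm_sub_sq_eq [Fintype ι] {w : ι → ℝ} (hw : ∑ i, w i = 1) (y : ι → F) :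
    ∑ j, w j * ∑ i, w i * ‖y j - y i‖ ^ 2
      = 2 * ∑ i, w i * ‖∑ j, w j • y j - y i‖ ^ 2 := by
  simp only [sum_mul_norm_sub_sq_eq hw y (y _), mul_add, Finset.sum_add_distrib, ← Finset.sum_mul,
    hw, norm_sub_rev (y _) (∑ j, w j • y j)]
  ring

theorem sum_mul_norm_sum_smul_sub_sq_le [Fintype ι] {w : ι → ℝ} (hw : w ∈ stdSimplex ℝ ι)
    {x : ι → E} {y : ι → F} (h : ∀ i j, ‖y i - y j‖ ≤ ‖x i - x j‖) (q : E) :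
    ∑ i, w i * ‖∑ j, w j • y j - y i‖ ^ 2 ≤ ∑ i, w i * ‖q - x i‖ ^ 2 := by
  have hpairs : ∑ j, w j * ∑ i, w i * ‖y j - y i‖ ^ 2 ≤ ∑ j, w j * ∑ i, w i * ‖x j - x i‖ ^ 2 := by
    gcongr with j _ i _
    exacts [hw.1 j, hw.1 i, h j i]
  rw [sum_sum_mul_norm_sub_sq_eq hw.2, sum_sum_mul_norm_sub_sq_eq hw.2] at hpairs
  rw [sum_mul_norm_sub_sq_eq hw.2 x q]
  linarith [sq_nonneg ‖q - ∑ j, w j • x j‖]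

open scoped Topology in
theorem nonpos_of_forall_le_mul {a b : ℝ} (h : ∀ t, 0 < t → t ≤ 1 → a ≤ t * b) : a ≤ 0 := by
  have hlim : Tendsto (fun t : ℝ ↦ t * b) (𝓝[>] 0) (𝓝 0) := by
    simpa using ((continuous_mul_const b).tendsto 0).mono_left nhdsWithin_le_nhds
  refine ge_of_tendsto hlim ?_
  filter_upwards [Ioc_mem_nhdsGT (zero_lt_one (α := ℝ))] with t ht using h t ht.1 ht.2

/- The weights maximize the concave function `w ↦ ∑ k, w k * (‖m w - y k‖ ^ 2 - d k)`, where `m w`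
is the barycenter; the inequality is first-order optimality towards the `i`-th vertex. -/
theorem exists_mem_stdSimplex_forall_norm_sub_sq_sub_le [Fintype ι] [Nonempty ι] (y : ι → F)
    (d : ι → ℝ) :
    ∃ w ∈ stdSimplex ℝ ι, ∀ i, ‖∑ j, w j • y j - y i‖ ^ 2 - d i
      ≤ ∑ k, w k * (‖∑ j, w j • y j - y k‖ ^ 2 - d k) := by
  classical
  obtain ⟨w, hw, hmax⟩ := (isCompact_stdSimplex ℝ ι).exists_isMaxOn
    ⟨_, single_mem_stdSimplex ℝ (Classical.arbitrary ι)⟩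
    (f := fun w ↦ ∑ k, w k * (‖∑ j, w j • y j - y k‖ ^ 2 - d k)) (by fun_prop)
  refine ⟨w, hw, fun i ↦ sub_nonpos.1 <|
    nonpos_of_forall_le_mul (b := ‖y i - ∑ j, w j • y j‖ ^ 2) fun t ht ht₁ ↦ ?_⟩
  set m := ∑ j, w j • y j with hm
  set w' : ι → ℝ := (1 - t) • w + t • Pi.single i 1 with hw'
  have hw'mem : w' ∈ stdSimplex ℝ ι :=
    convex_stdSimplex ℝ ι hw (single_mem_stdSimplex ℝ i) (sub_nonneg.2 ht₁) ht.le
      (sub_add_cancel 1 t)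
  have hbary : m - ∑ j, w' j • y j = -(t • (y i - m)) := by
    have : ∑ j, w' j • y j = (1 - t) • m + t • y i := by
      simp [hw', hm, add_smul, Finset.sum_add_distrib, Finset.smul_sum, mul_smul, Pi.single_apply]
    rw [this]
    module
  have hsplit : ∑ k, w' k * (‖m - y k‖ ^ 2 - d k)
      = (1 - t) * ∑ k, w k * (‖m - y k‖ ^ 2 - d k) + t * (‖m - y i‖ ^ 2 - d i) := by
    simp [hw', add_mul, Finset.sum_add_distrib, Finset.mul_sum, mul_assoc, Pi.single_apply]
  have hopt : ∑ k, w' k * (‖m - y k‖ ^ 2 - d k) - t ^ 2 * ‖y i - m‖ ^ 2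
      ≤ ∑ k, w k * (‖m - y k‖ ^ 2 - d k) := by
    have hle := hmax hw'mem
    have hvar := sum_mul_norm_sub_sq_eq hw'mem.2 y m
    rw [hbary, norm_neg, norm_smul, mul_pow, Real.norm_eq_abs, sq_abs] at hvar
    simp only [Set.mem_ofPred_eq, mul_sub, Finset.sum_sub_distrib] at hle hvar ⊢
    linarith
  rw [hsplit] at hopt
  exact le_of_mul_le_mul_left (by linarith) ht

theorem exists_forall_norm_sub_le_of_finite [Finite ι] {x : ι → E} {y : ι → F}
    (h : ∀ i j, ‖y i - y j‖ ≤ ‖x i - x j‖) (q : E) : ∃ p : F, ∀ i, ‖p - y i‖ ≤ ‖q - x i‖ := by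
  cases nonempty_fintype ι
  cases isEmpty_or_nonempty ι
  · exact ⟨0, isEmptyElim⟩
  obtain ⟨w, hw, hopt⟩ :=
    exists_mem_stdSimplex_forall_norm_sub_sq_sub_le y fun i ↦ ‖q - x i‖ ^ 2
  refine ⟨∑ j, w j • y j, fun i ↦ (sq_le_sq₀ (norm_nonneg _) (norm_nonneg _)).1 ?_⟩
  have hspread := sum_mul_norm_sum_smul_sub_sq_le hw h q
  have hi := hopt i
  simp only [mul_sub, Finset.sum_sub_distrib] at hi
  linarith

theorem nonempty_iInter_closedBall_strongDual {𝕜 V : Type*} [NontriviallyNormedField 𝕜]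
    [ProperSpace 𝕜] [SeminormedAddCommGroup V] [NormedSpace 𝕜 V] (c : ι → StrongDual 𝕜 V)
    (r : ι → ℝ) (h : ∀ s : Finset ι, (⋂ i ∈ s, Metric.closedBall (c i) (r i)).Nonempty) :
    (⋂ i, Metric.closedBall (c i) (r i)).Nonempty := by
  classical
  cases isEmpty_or_nonempty ι with
  | inl _ => simp
  | inr hι =>
    obtain ⟨i₀⟩ := hι
    obtain ⟨f, -, hf⟩ := (WeakDual.isCompact_closedBall (c i₀) (r i₀)).inter_iInter_nonempty _
      (fun i ↦ WeakDual.isClosed_closedBall (c i) (r i)) fun s ↦ by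
        obtain ⟨f, hf⟩ := h (insert i₀ s)
        simp only [Finset.mem_insert, Set.iInter_iInter_eq_or_left, Set.mem_inter_iff] at hf
        refine ⟨WeakDual.toStrongDual.symm f, ?_⟩
        simpa using hf
    refine ⟨WeakDual.toStrongDual f, ?_⟩
    simpa using hf

theorem nonempty_iInter_closedBall [CompleteSpace F] (c : ι → F) (r : ι → ℝ)
    (h : ∀ s : Finset ι, (⋂ i ∈ s, Metric.closedBall (c i) (r i)).Nonempty) :
    (⋂ i, Metric.closedBall (c i) (r i)).Nonempty := by
  let e := InnerProductSpace.toDual ℝ F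
  obtain ⟨f, hf⟩ := nonempty_iInter_closedBall_strongDual (fun i ↦ e (c i)) r fun s ↦ by
    obtain ⟨p, hp⟩ := h s
    exact ⟨e p, by simpa using hp⟩
  refine ⟨e.symm f, ?_⟩
  simpa [← e.dist_map] using hf

theorem exists_forall_norm_sub_le [CompleteSpace F] {x : ι → E} {y : ι → F}
    (h : ∀ i j, ‖y i - y j‖ ≤ ‖x i - x j‖) (q : E) : ∃ p : F, ∀ i, ‖p - y i‖ ≤ ‖q - x i‖ := by
  obtain ⟨p, hp⟩ := nonempty_iInter_closedBall y (fun i ↦ ‖q - x i‖) fun s ↦ by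
    obtain ⟨p, hp⟩ := exists_forall_norm_sub_le_of_finite (ι := s) (fun i j ↦ h i j) q
    exact ⟨p, by simpa [dist_eq_norm] using hp⟩
  exact ⟨p, by simpa [dist_eq_norm] using hp⟩

end Kirszbraun

section Minty

variable {X : Type*} [NormedAddCommGroup X] [InnerProductSpace ℝ X]

theorem norm_sub_le_norm_add_iff_inner_nonneg (x y : X) : ‖x - y‖ ≤ ‖x + y‖ ↔ 0 ≤ ⟪x, y⟫ := by
  rw [← sq_le_sq₀ (norm_nonneg _) (norm_nonneg _), norm_sub_sq_real, norm_add_sq_real]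
  constructor <;> intro h <;> linarith

theorem norm_smul_sub_smul_le_norm_smul_add_smul_iff {k l : ℝ} (hk : 0 < k) (hl : 0 < l) (x w : X) :
    ‖k • x - l • w‖ ≤ ‖k • x + l • w‖ ↔ 0 ≤ ⟪w, x⟫ := by
  rw [norm_sub_le_norm_add_iff_inner_nonneg, real_inner_smul_left, real_inner_smul_right,
    mul_nonneg_iff_of_pos_left hk, mul_nonneg_iff_of_pos_left hl, real_inner_comm]

theorem StrMono.of_le {β β' : ℝ} (hβ : β' ≤ β) {T : X → Set X} (hT : StrMono β T) :
    StrMono β' T := fun x x' w w' hw hw' ↦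
  (mul_le_mul_of_nonneg_right hβ (sq_nonneg _)).trans (hT x x' w w' hw hw')

theorem StrMono.inner_nonneg {T : X → Set X} (hT : StrMono 0 T) {x x' w w' : X} (hw : w ∈ T x)
    (hw' : w' ∈ T x') : 0 ≤ ⟪w - w', x - x'⟫ := by
  simpa using hT x x' w w' hw hw'

theorem MaxStrMono.of_le {β β' : ℝ} (hβ : β' ≤ β) {T : X → Set X} (hT : MaxStrMono β T) :
    MaxStrMono β' T :=
  ⟨hT.1.of_le hβ, hT.2⟩

theorem MaxStrMono.mem_of_forall_inner_nonneg {T : X → Set X} (hT : MaxStrMono 0 T) {x w : X}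
    (h : ∀ x' w', w' ∈ T x' → 0 ≤ ⟪w - w', x - x'⟫) : w ∈ T x := by
  let T' : X → Set X := fun z ↦ T z ∪ {w' | z = x ∧ w' = w}
  have hT' : StrMono 0 T' := by
    rintro z z' v v' (hv | ⟨rfl, rfl⟩) (hv' | ⟨rfl, rfl⟩)
    · exact hT.1 z z' v v' hv hv'
    · simpa [← inner_neg_neg (v - v')] using h z v hv
    · simpa using h z' v' hv'
    · simp
  rw [← hT.2 T' hT' fun z ↦ Set.subset_union_left]
  exact Or.inr ⟨rfl, rfl⟩

theorem MaxStrMono.exists_smul_add_smul_eq [CompleteSpace X] {T : X → Set X}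
    (hT : MaxStrMono 0 T) {k l : ℝ} (hk : 0 < k) (hl : 0 < l) (y : X) :
    ∃ u, ∃ a ∈ T u, k • u + l • a = y := by
  let G := {g : X × X // g.2 ∈ T g.1}
  have hcontr (g g' : G) : ‖(k • g.1.1 - l • g.1.2) - (k • g'.1.1 - l • g'.1.2)‖
      ≤ ‖(k • g.1.1 + l • g.1.2) - (k • g'.1.1 + l • g'.1.2)‖ := by
    convert (norm_smul_sub_smul_le_norm_smul_add_smul_iff hk hl (g.1.1 - g'.1.1)
      (g.1.2 - g'.1.2)).2 (hT.1.inner_nonneg g.2 g'.2) using 2 <;> module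
  obtain ⟨p, hp⟩ := exists_forall_norm_sub_le hcontr y
  obtain ⟨u, a, hsum, hdiff⟩ : ∃ u a, k • u + l • a = y ∧ k • u - l • a = p := by
    refine ⟨k⁻¹ • (2⁻¹ : ℝ) • (y + p), l⁻¹ • (2⁻¹ : ℝ) • (y - p), ?_, ?_⟩ <;>
    · rw [smul_inv_smul₀ hk.ne', smul_inv_smul₀ hl.ne']
      module
  refine ⟨u, a, hT.mem_of_forall_inner_nonneg fun x w hw ↦ ?_, hsum⟩
  rw [← norm_smul_sub_smul_le_norm_smul_add_smul_iff hk hl]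
  convert hp ⟨(x, w), hw⟩ using 2
  · rw [← hdiff]
    module
  · rw [← hsum]
    module

end Minty

section ProductSpace

variable {X : Type*} [NormedAddCommGroup X] [InnerProductSpace ℝ X]

theorem inner3_comm (z z' : X × X × X) : inner3 z z' = inner3 z' z := by
  simp only [inner3, real_inner_comm]

theorem inner3_add_left (z₁ z₂ z : X × X × X) :
    inner3 (z₁ + z₂) z = inner3 z₁ z + inner3 z₂ z := by
  simp only [inner3, Prod.fst_add, Prod.snd_add, inner_add_left]
  ring

theorem inner3_neg_right (z z' : X × X × X) : inner3 z (-z') = -inner3 z z' := by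
  simp only [inner3, Prod.fst_neg, Prod.snd_neg, inner_neg_right]
  ring

theorem Mono3.maxMono3_of_exists_add_eq {T : X × X × X → Set (X × X × X)} (hT : Mono3 T)
    {M : X × X × X → X × X × X} (hM : ∀ z z', z ≠ z' → 0 < inner3 (z - z') (M z - M z'))
    (hsurj : ∀ y, ∃ z, ∃ t ∈ T z, M z + t = y) : MaxMono3 T := by
  refine ⟨hT, fun T' hT' hsub ↦ funext fun z ↦ (hsub z).antisymm' fun t ht ↦ ?_⟩
  obtain ⟨z', t', ht', heq⟩ := hsurj (M z + t)
  have hdiff : t - t' = -(M z - M z') := by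
    rw [neg_sub, sub_eq_sub_iff_add_eq_add, add_comm t, heq]
  have hmono : inner3 (z - z') (M z - M z') ≤ 0 := by
    have := hT' z z' t t' ht (hsub z' ht')
    rwa [hdiff, inner3_neg_right, neg_nonneg] at this
  obtain rfl : z = z' := by
    by_contra hne
    exact hmono.not_gt (hM z z' hne)
  rwa [← add_left_cancel heq]

/-- The preconditioner `M` whose sum with `ℒ_θ + γC` becomes triangular in `(u, v)` once `x` is
eliminated, provided `μ = θ + c`. For `θ > 0` one may take `c = 0`; the terms `c (u + v)` allow
every real `θ`. -/
noncomputable def precond (c μ : ℝ) (z : X × X × X) : X × X × X :=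
  (z.1 + c • (z.1 + z.2.1), z.2.1 + c • (z.1 + z.2.1), μ⁻¹ • z.2.2)

theorem precond_sub (c μ : ℝ) (z z' : X × X × X) :
    precond c μ (z - z') = precond c μ z - precond c μ z' := by
  ext <;> simp only [precond, Prod.fst_sub, Prod.snd_sub] <;> module

theorem inner3_precond_self (c μ : ℝ) (z : X × X × X) : inner3 z (precond c μ z)
    = ‖z.1‖ ^ 2 + ‖z.2.1‖ ^ 2 + c * ‖z.1 + z.2.1‖ ^ 2 + μ⁻¹ * ‖z.2.2‖ ^ 2 := by
  simp only [inner3, precond, ← real_inner_self_eq_norm_sq, inner_add_left, inner_add_right,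
    real_inner_smul_right]
  ring

theorem inner3_precond_self_pos {c μ : ℝ} (hc : 0 ≤ c) (hμ : 0 < μ) {z : X × X × X} (hz : z ≠ 0) :
    0 < inner3 z (precond c μ z) := by
  obtain ⟨u, v, x⟩ := z
  have hne : u ≠ 0 ∨ v ≠ 0 ∨ x ≠ 0 := by
    by_contra! h
    exact hz (by simp [h])
  rw [inner3_precond_self]
  rcases hne with hu | hv | hx <;> positivity

theorem Lmap_sub (θ : ℝ) (z z' : X × X × X) : Lmap θ (z - z') = Lmap θ z - Lmap θ z' := by
  ext <;> simp only [Lmap, Prod.fst_sub, Prod.snd_sub] <;> module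

theorem inner3_Lmap_self (θ : ℝ) (z : X × X × X) :
    inner3 (Lmap θ z) z = (1 - θ) * ‖z.1 - z.2.1‖ ^ 2 := by
  obtain ⟨u, v, x⟩ := z
  simp only [inner3, Lmap, ← real_inner_self_eq_norm_sq, inner_sub_left, inner_sub_right,
    inner_add_left, real_inner_smul_left]
  rw [real_inner_comm u v, real_inner_comm u x, real_inner_comm v x]
  ring

theorem StrMono.le_inner3_LC {β θ γ : ℝ} {A B : X → Set X} (hA : StrMono β A) (hB : StrMono β B)
    (hγ : 0 ≤ γ) {z z' r r' : X × X × X} (hr : r ∈ LC θ γ A B z) (hr' : r' ∈ LC θ γ A B z') :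
    (1 - θ) * ‖(z.1 - z'.1) - (z.2.1 - z'.2.1)‖ ^ 2
        + γ * β * (‖z.1 - z'.1‖ ^ 2 + ‖z.2.1 - z'.2.1‖ ^ 2)
      ≤ inner3 (r - r') (z - z') := by
  obtain ⟨a, ha, b, hb, rfl⟩ := hr
  obtain ⟨a', ha', b', hb', rfl⟩ := hr'
  have hA' := mul_le_mul_of_nonneg_left (hA _ _ _ _ ha ha') hγ
  have hB' := mul_le_mul_of_nonneg_left (hB _ _ _ _ hb hb') hγ
  have hC : inner3 (γ • ((a, b, (0 : X)) - (a', b', 0))) (z - z')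
      = γ * ⟪a - a', z.1 - z'.1⟫ + γ * ⟪b - b', z.2.1 - z'.2.1⟫ := by
    simp [inner3, real_inner_smul_left]
  rw [add_sub_add_comm, ← Lmap_sub, ← smul_sub, inner3_add_left, inner3_Lmap_self, hC]
  simp only [Prod.fst_sub, Prod.snd_sub]
  linarith

theorem StrMono.mono3_LC {β θ γ : ℝ} {A B : X → Set X} (hA : StrMono β A) (hB : StrMono β B)
    (hβ : 0 ≤ β) (hγ : 0 ≤ γ) (hθ : θ ≤ 1 + γ * β / 2) : Mono3 (LC θ γ A B) := by
  intro z z' t t' ht ht'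
  rw [inner3_comm]
  refine le_trans ?_ (hA.le_inner3_LC hB hγ ht ht')
  set p := z.1 - z'.1
  set q := z.2.1 - z'.2.1
  have hpar : ‖p - q‖ ^ 2 ≤ 2 * (‖p‖ ^ 2 + ‖q‖ ^ 2) := by
    linarith [parallelogram_law_with_norm ℝ p q, mul_self_nonneg ‖p + q‖]
  calc 0 ≤ (1 + γ * β / 2 - θ) * ‖p - q‖ ^ 2 := mul_nonneg (sub_nonneg.2 hθ) (sq_nonneg _)
    _ = (1 - θ) * ‖p - q‖ ^ 2 + γ * β * (‖p - q‖ ^ 2 / 2) := by ring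
    _ ≤ (1 - θ) * ‖p - q‖ ^ 2 + γ * β * (‖p‖ ^ 2 + ‖q‖ ^ 2) := by
      gcongr
      linarith

theorem MaxStrMono.exists_precond_add_LC_eq [CompleteSpace X] {θ γ c : ℝ} {A B : X → Set X}
    (hA : MaxStrMono 0 A) (hB : MaxStrMono 0 B) (hγ : 0 < γ) (hc : 0 ≤ c) (hθc : 0 < θ + c)
    (y : X × X × X) : ∃ z, ∃ t ∈ LC θ γ A B z, precond c (θ + c) z + t = y := by
  obtain ⟨y₁, y₂, y₃⟩ := y
  have hk : 0 < 2 + 2 * c := by positivity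
  obtain ⟨u, a, ha, hu⟩ := hA.exists_smul_add_smul_eq hk hγ (y₁ + (θ + c) • y₃)
  obtain ⟨v, b, hb, hv⟩ := hB.exists_smul_add_smul_eq hk hγ (y₂ + (2 : ℝ) • u - (θ + c) • y₃)
  refine ⟨(u, v, (θ + c) • (y₃ - u + v)), _, ⟨a, ha, b, hb, rfl⟩, ?_⟩
  obtain rfl := eq_sub_of_add_eq hu.symm
  obtain rfl := eq_sub_of_add_eq (eq_add_of_sub_eq hv.symm)
  ext
  · simp only [precond, Lmap, Prod.fst_add, Prod.smul_fst]
    module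
  · simp only [precond, Lmap, Prod.fst_add, Prod.snd_add, Prod.smul_fst, Prod.smul_snd]
    module
  · simp only [precond, Lmap, Prod.snd_add, Prod.smul_snd, inv_smul_smul₀ hθc.ne']
    module

theorem MaxStrMono.maxMono3_LC [CompleteSpace X] {β θ γ : ℝ} {A B : X → Set X}
    (hA : MaxStrMono β A) (hB : MaxStrMono β B) (hβ : 0 ≤ β) (hγ : 0 < γ)
    (hθ : θ ≤ 1 + γ * β / 2) : MaxMono3 (LC θ γ A B) := by
  have hc : 0 ≤ |θ| + 1 := by positivity
  have hθc : 0 < θ + (|θ| + 1) := by linarith [neg_abs_le θ]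
  refine (hA.1.mono3_LC hB.1 hβ hγ.le hθ).maxMono3_of_exists_add_eq (fun z z' hne ↦ ?_)
    ((hA.of_le hβ).exists_precond_add_LC_eq (hB.of_le hβ) hγ hc hθc)
  rw [← precond_sub]
  exact inner3_precond_self_pos hc hθc (sub_ne_zero.2 hne)

end ProductSpace

theorem stmt12_general {X : Type*} [NormedAddCommGroup X] [InnerProductSpace ℝ X]
    [CompleteSpace X] (β : ℝ) (hβ : 0 ≤ β) (A B : X → Set X) (hA : MaxStrMono β A)
    (hB : MaxStrMono β B) (γ θt : ℝ) (hγ : 0 < γ) :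
    (∀ z z' : X × X × X,
        inner3 (Lmap θt (z - z')) (z - z')
          = (1 - θt) * ‖(z.1 - z'.1) - (z.2.1 - z'.2.1)‖ ^ 2)
    ∧ (∀ z z' rr rr' : X × X × X, rr ∈ LC θt γ A B z → rr' ∈ LC θt γ A B z' →
        (1 - θt) * ‖(z.1 - z'.1) - (z.2.1 - z'.2.1)‖ ^ 2
            + γ * β * (‖z.1 - z'.1‖ ^ 2 + ‖z.2.1 - z'.2.1‖ ^ 2)
          ≤ inner3 (rr - rr') (z - z'))
    ∧ (θt ≤ 1 + γ * β / 2 → MaxMono3 (LC θt γ A B)) :=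
  ⟨fun z z' ↦ inner3_Lmap_self θt (z - z'),
    fun _ _ _ _ hr hr' ↦ hA.1.le_inner3_LC hB.1 hγ.le hr hr',
    hA.maxMono3_LC hB hβ hγ⟩

/-- (a) the quadratic identity for `ℒ_θ̃` and the strong monotonicity
lower bound for `ℒ_θ̃ + γC`; (b) `ℒ_θ̃ + γC` is maximal monotone for `θ̃ ∈ (0, 1 + γβ/2]`. -/
theorem stmt12 {X : Type*} [NormedAddCommGroup X] [InnerProductSpace ℝ X]
    [FiniteDimensional ℝ X]
    (β : ℝ) (hβ : 0 ≤ β) (A B : X → Set X)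
    (hA : MaxStrMono β A) (hB : MaxStrMono β B)
    (γ θt : ℝ) (hγ : 0 < γ) (hθt : 0 < θt) :
    (∀ z z' : X × X × X,
        inner3 (Lmap θt (z - z')) (z - z')
          = (1 - θt) * ‖(z.1 - z'.1) - (z.2.1 - z'.2.1)‖ ^ 2)
    ∧ (∀ z z' rr rr' : X × X × X, rr ∈ LC θt γ A B z → rr' ∈ LC θt γ A B z' →
        (1 - θt) * ‖(z.1 - z'.1) - (z.2.1 - z'.2.1)‖ ^ 2
            + γ * β * (‖z.1 - z'.1‖ ^ 2 + ‖z.2.1 - z'.2.1‖ ^ 2)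
          ≤ inner3 (rr - rr') (z - z'))
    ∧ (θt ≤ 1 + γ * β / 2 → MaxMono3 (LC θt γ A B)) :=
  haveI := FiniteDimensional.complete ℝ X
  stmt12_general β hβ A B hA hB γ θt hγ
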